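/- For every μ ∈ P∨ the function 𝒱_μ : V → ℝ is smooth and strictly convex, its Hessian at every ξ ∈ V is the positive-definite bilinear form H_{η,ζ}(ξ) = c⟨η,ζ⟩ + ∑_{α∈R₀} (1−t_α²)⟨η,α⟩⟨ζ,α⟩ / (⟨α,α⟩(1 − 2t_α cos⟨ξ,α⟩ + t_α²)), 𝒱_μ(ξ) → +∞ as ‖ξ‖ → ∞, and 𝒱_μ attains a unique global minimum ξ_μ ∈ V, which is the unique solution of the critical equation c ξ + ∑_{α∈R₀⁺} v_α(⟨ξ,α⟩) α∨ = 2π(ρ∨ + μ). -/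

import Mathlib

open scoped RealInnerProductSpace BigOperators Classical

noncomputable section

/-- Alternating composition `A ∘ B ∘ A ∘ ⋯` with `m` factors (starting with `A`). -/
def altComp {α : Type*} (A B : α → α) : ℕ → (α → α)
  | 0 => id
  | m + 1 => A ∘ altComp B A m

/-- The sign of a real number, as an integer (with `sgnZ 0 = 0`). -/
def sgnZ (x : ℝ) : ℤ := if 0 < x then 1 else if x < 0 then -1 else 0

/-- The function `v(x) = (1-t²)∫₀ˣ dy/(1-2t cos y+t²)`. -/
def mvfun (t x : ℝ) : ℝ :=
  (1 - t ^ 2) * ∫ y in (0:ℝ)..x, 1 / (1 - 2 * t * Real.cos y + t ^ 2)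

section AffineOps

variable {V : Type*} [NormedAddCommGroup V] [InnerProductSpace ℝ V]

/-- The coroot `α∨ = 2α/⟨α,α⟩`. -/
def coroot (α : V) : V := (2 / ⟪α, α⟫) • α

/-- The affine root `a = α∨ + r c` (encoded as the pair `(α, r)`), as an affine
function on `V`. -/
def aval (c : ℝ) (a : V × ℤ) (x : V) : ℝ := ⟪x, coroot a.1⟫ + a.2 * c

/-- The affine reflection `s_a(x) = x - a(x) α` attached to `a = α∨ + r c`. -/
def sAff (c : ℝ) (a : V × ℤ) (x : V) : V := x - aval c a x • a.1

/-- `w` maps the affine root `a` to the affine root `b`, i.e. `(wa)(x) = a(w⁻¹x) = b(x)`. -/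
def mapsRoot (c : ℝ) (w : Equiv.Perm V) (a b : V × ℤ) : Prop :=
  ∀ x : V, aval c a (w⁻¹ x) = aval c b x

/-- The linear part `w′` of an affine transformation `w`. -/
def linPart (w : Equiv.Perm V) (x : V) : V := w x - w 0

variable {R : Type*} [Field R]

/-- The difference-reflection operator `T̂_a`. -/
def hatT (c : ℝ) (τ : V × ℤ → R) (a : V × ℤ) (f : V → R) (x : V) : R :=
  if 0 < aval c a x then τ a * f (sAff c a x)
  else if aval c a x = 0 then τ a * f x
  else (τ a)⁻¹ * f (sAff c a x) + (τ a - (τ a)⁻¹) * f x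

/-- The discrete integral operator `J_a`. -/
def Jop (c : ℝ) (a : V × ℤ) (f : V → R) (x : V) : R :=
  if 0 < aval c a x then
    - ∑ k ∈ Finset.Icc (1 : ℤ) ⌊aval c a x⌋, f (x - k • a.1)
  else if aval c a x = 0 then 0
  else ∑ k ∈ Finset.Ico (0 : ℤ) (-⌊aval c a x⌋), f (x + k • a.1)

/-- The integral-reflection operator `I_a = τ_a s_a + (τ_a - τ_a⁻¹) J_a`. -/
def Iop (c : ℝ) (τ : V × ℤ → R) (a : V × ℤ) (f : V → R) (x : V) : R :=
  τ a * f (sAff c a x) + (τ a - (τ a)⁻¹) * Jop c a f x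

end AffineOps

/-- An irreducible reduced crystallographic root system spanning `V`, together with a
choice of positive roots, simple roots, and the highest short root. -/
structure RootSystemData (V : Type*) [NormedAddCommGroup V] [InnerProductSpace ℝ V] :
    Type _ where
  n : ℕ
  n_pos : 1 ≤ n
  rank_eq : Module.finrank ℝ V = n
  R0 : Finset V
  ne_zero : ∀ α ∈ R0, α ≠ (0 : V)
  span_top : Submodule.span ℝ (R0 : Set V) = ⊤
  reduced : ∀ α ∈ R0, ∀ t : ℝ, t • α ∈ R0 → t = 1 ∨ t = -1
  crystallographic : ∀ α ∈ R0, ∀ β ∈ R0, ∃ k : ℤ, ⟪β, coroot α⟫ = (k : ℝ)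
  reflect_mem : ∀ α ∈ R0, ∀ β ∈ R0, β - ⟪β, coroot α⟫ • α ∈ R0
  irreducible : ∀ S : Finset V, S ⊆ R0 →
      (∀ a ∈ S, ∀ b ∈ R0, b ∉ S → ⟪a, b⟫ = 0) → S = ∅ ∨ S = R0
  pos : Finset V
  pos_subset : pos ⊆ R0
  pos_or_neg : ∀ α ∈ R0, α ∈ pos ∨ -α ∈ pos
  pos_not_both : ∀ α ∈ pos, -α ∉ pos
  pos_add : ∀ α ∈ pos, ∀ β ∈ pos, α + β ∈ R0 → α + β ∈ pos
  simpleRoot : Fin n → V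
  simpleRoot_mem : ∀ j, simpleRoot j ∈ pos
  pos_natCombo : ∀ α ∈ pos, ∃ k : Fin n → ℕ, α = ∑ j, (k j : ℝ) • simpleRoot j
  hshort : V
  hshort_mem : hshort ∈ pos
  hshort_short : ∀ α ∈ R0, ‖hshort‖ ≤ ‖α‖
  hshort_highest : ∀ α ∈ R0, ‖α‖ = ‖hshort‖ →
      ∃ k : Fin n → ℕ, hshort - α = ∑ j, (k j : ℝ) • simpleRoot j

namespace RootSystemData

variable {V : Type*} [NormedAddCommGroup V] [InnerProductSpace ℝ V]
variable (D : RootSystemData V)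

/-- The weight lattice `P`. -/
def weightLattice : Set V :=
  {x : V | ∀ α ∈ D.R0, ∃ k : ℤ, ⟪x, coroot α⟫ = (k : ℝ)}

/-- The root lattice `Q`. -/
def rootLattice : Set V := (Submodule.span ℤ (D.R0 : Set V) : Set V)

/-- The coweight lattice `P∨`. -/
def coweightLattice : Set V :=
  {x : V | ∀ α ∈ D.R0, ∃ k : ℤ, ⟪x, α⟫ = (k : ℝ)}

/-- The dominant cone. -/
def dominant : Set V := {x : V | ∀ α ∈ D.pos, 0 ≤ ⟪x, coroot α⟫}

/-- `ω` is a minuscule (dominant) weight. -/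
def IsMinuscule (ω : V) : Prop :=
  ω ∈ D.weightLattice ∧ ω ∈ D.dominant ∧ ω ≠ 0 ∧
    ∀ α ∈ D.pos, ⟪ω, coroot α⟫ ≤ 1

/-- `ω` is the quasi-minuscule weight, i.e. the highest short root. -/
def IsQuasiMinuscule (ω : V) : Prop := ω = D.hshort

/-- The saturated set `P_ϑ` containing the (quasi-)minuscule weights. -/
def Ptheta : Set V :=
  {ν : V | ν ∈ D.weightLattice ∧ ∀ α ∈ D.R0, α ≠ ν → |⟪ν, coroot α⟫| ≤ 1}

/-- Half sum of the positive roots. -/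
def rhoHalf : V := (2⁻¹ : ℝ) • ∑ α ∈ D.pos, α

/-- Half sum of the positive coroots. -/
def rhoVee : V := (2⁻¹ : ℝ) • ∑ α ∈ D.pos, coroot α

/-- `(α, r)` encodes an affine root. -/
def IsAffRoot (a : V × ℤ) : Prop := a.1 ∈ D.R0

/-- `(α, r)` encodes a positive affine root. -/
def IsAffPos (a : V × ℤ) : Prop :=
  a.1 ∈ D.R0 ∧ (1 ≤ a.2 ∨ (a.2 = 0 ∧ a.1 ∈ D.pos))

/-- `(α, r)` encodes a negative affine root. -/
def IsAffNeg (a : V × ℤ) : Prop := D.IsAffPos (-a.1, -a.2)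

/-- The simple affine roots `a₀ = -ϑ∨ + c`, `a_j = α_j∨`. -/
def aSimple (j : Fin (D.n + 1)) : V × ℤ :=
  Fin.cons (α := fun _ => V × ℤ) (-D.hshort, (1 : ℤ))
    (fun i => (D.simpleRoot i, (0 : ℤ))) j

/-- The reflections generating the finite Weyl group `W₀`. -/
def W0Gens : Set (Equiv.Perm V) :=
  {e | ∃ α ∈ D.R0, ∀ x, e x = x - ⟪x, coroot α⟫ • α}

/-- The finite Weyl group `W₀`. -/
def W0 : Subgroup (Equiv.Perm V) := Subgroup.closure D.W0Gens

variable (c : ℝ)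

/-- The affine reflections generating the affine Weyl group `W_R`. -/
def AffGens : Set (Equiv.Perm V) :=
  {e | ∃ a : V × ℤ, D.IsAffRoot a ∧ ∀ x, e x = sAff c a x}

/-- The affine Weyl group `W_R`. -/
def WR : Subgroup (Equiv.Perm V) := Subgroup.closure (D.AffGens c)

/-- The translations `t_{cλ}`, `λ ∈ P`. -/
def TransGens : Set (Equiv.Perm V) :=
  {e | ∃ lam ∈ D.weightLattice, ∀ x : V, e x = x + c • lam}

/-- The extended affine Weyl group `W = W₀ ⋉ t(cP)`. -/
def Wext : Subgroup (Equiv.Perm V) :=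
  Subgroup.closure (D.AffGens c ∪ D.TransGens c)

/-- The set `R(w) = R⁺ ∩ w⁻¹(R⁻)`. -/
def RW (w : Equiv.Perm V) : Set (V × ℤ) :=
  {a | D.IsAffPos a ∧ ∃ b : V × ℤ, D.IsAffNeg b ∧ mapsRoot c w a b}

/-- The length `ℓ(w) = #R(w)`. -/
def len (w : Equiv.Perm V) : ℕ := (D.RW c w).ncard

/-- The closed fundamental alcove `A_c`. -/
def alcove : Set V := {x | ∀ a : V × ℤ, D.IsAffPos a → 0 ≤ aval c a x}

/-- `wmin x` is the unique shortest element of the affine Weyl group mapping `x` into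
the fundamental alcove. -/
def IsWmin (wmin : V → Equiv.Perm V) : Prop :=
  ∀ x : V, wmin x ∈ D.WR c ∧ (wmin x) x ∈ D.alcove c ∧
    ∀ w ∈ D.WR c, w x ∈ D.alcove c → D.len c (wmin x) < D.len c w ∨ w = wmin x

/-- One step in the Bruhat order: `w < w s_a` whenever `ℓ(w) < ℓ(w s_a)`. -/
def bruhatStep (w w' : Equiv.Perm V) : Prop :=
  ∃ a : V × ℤ, D.IsAffPos a ∧ ∃ e : Equiv.Perm V,
    (∀ x, e x = sAff c a x) ∧ w' = w * e ∧ D.len c w < D.len c w'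

/-- The Bruhat order on the affine Weyl group. -/
def bruhatLE (w w' : Equiv.Perm V) : Prop :=
  Relation.ReflTransGen (D.bruhatStep c) w w'

/-- The partial order on `V`: `x ≤ y` iff `x₊ = y₊` and `w_x ≤ w_y` (Bruhat). -/
def vle (wmin : V → Equiv.Perm V) (x y : V) : Prop :=
  (wmin x) x = (wmin y) y ∧ D.bruhatLE c (wmin x) (wmin y)

/-- The interval `[x, y]` for the order `vle`. -/
def vInterval (wmin : V → Equiv.Perm V) (x y : V) : Set V :=
  {z : V | D.vle c wmin x z ∧ D.vle c wmin z y}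

/-- The partial order `⪯` on the weight lattice:
`μ ⪯ λ` iff `λ - μ ∈ Q` and `Conv [μ₊, μ] ⊆ Conv [λ₊, λ]`. -/
def pleq (wmin : V → Equiv.Perm V) (μ lam : V) : Prop :=
  lam - μ ∈ D.rootLattice ∧
    convexHull ℝ (D.vInterval c wmin ((wmin μ) μ) μ)
      ⊆ convexHull ℝ (D.vInterval c wmin ((wmin lam) lam) lam)

section Ops

variable {R : Type*} [Field R]

/-- `τ` is a multiplicity function: nonvanishing on affine roots, and invariant
under the (extended affine) Weyl group action on the affine roots. -/
def IsMultiplicity (τ : V × ℤ → R) : Prop :=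
  (∀ a : V × ℤ, D.IsAffRoot a → τ a ≠ 0) ∧
    ∀ w ∈ D.Wext c, ∀ a b : V × ℤ, D.IsAffRoot a → D.IsAffRoot b →
      mapsRoot c w a b → τ a = τ b

/-- `τ_w = ∏_{a ∈ R(w)} τ_a`. -/
def tauw (τ : V × ℤ → R) (w : Equiv.Perm V) : R := ∏ᶠ a ∈ D.RW c w, τ a

/-- `τ₀`, the multiplicity of the affine simple root `a₀`. -/
def tauZero (τ : V × ℤ → R) : R := τ (-D.hshort, (1 : ℤ))

/-- The operator `I_{j₁} ∘ ⋯ ∘ I_{jℓ}` attached to a word in the simple reflections. -/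
def wordOp (τ : V × ℤ → R) (l : List (Fin (D.n + 1))) : (V → R) → V → R :=
  (l.map fun j => Iop c τ (D.aSimple j)).foldr (· ∘ ·) id

/-- `l` is a reduced word for `w`, i.e. `w = s_{j₁} ∘ ⋯ ∘ s_{jℓ}` with `ℓ = ℓ(w)`. -/
def IsReducedWord (w : Equiv.Perm V) (l : List (Fin (D.n + 1))) : Prop :=
  l.length = D.len c w ∧
    ∀ x : V, w x = ((l.map fun j => sAff c (D.aSimple j)).foldr (· ∘ ·) id) x

/-- `e∨_τ(η) = ∏_{α ∈ R₀⁺} τ_{α∨}^{⟨η,α∨⟩}`. -/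
def etau (τ : V × ℤ → R) (η : V) : R :=
  ∏ α ∈ D.pos, τ (α, (0 : ℤ)) ^ ⌊⟪η, coroot α⟫⌋

/-- `h∨_τ = τ₀² e∨_τ(ϑ)`. -/
def hvee (τ : V × ℤ → R) : R := D.tauZero τ ^ 2 * D.etau τ D.hshort

/-- `θ(μ) = #{b ∈ R(w_μ) : b(μ) = -2}`. -/
def theta (wmin : V → Equiv.Perm V) (μ : V) : ℕ :=
  {b : V × ℤ | b ∈ D.RW c (wmin μ) ∧ aval c b μ = -2}.ncard

/-- The coefficient `c_{λ,η} = θ(λ-η) e∨_τ(η) (h∨_τ)^{-sign⟨λ,η∨⟩}`. -/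
def ccoef (τ : V × ℤ → R) (wmin : V → Equiv.Perm V) (lam η : V) : R :=
  (D.theta c wmin (lam - η) : R) * D.etau τ η *
    D.hvee τ ^ (-sgnZ ⟪lam, coroot η⟫)

/-- The coefficient `a_{λ,ν} = τ_{w_{w_λ(λ-ν)}} τ_{w_{w_λ(λ-ν)} w_λ} τ_{w_λ}⁻¹`. -/
def acoef (τ : V × ℤ → R) (wmin : V → Equiv.Perm V) (lam ν : V) : R :=
  D.tauw c τ (wmin ((wmin lam) (lam - ν))) *
    D.tauw c τ (wmin ((wmin lam) (lam - ν)) * wmin lam) *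
    (D.tauw c τ (wmin lam))⁻¹

/-- The coefficient `b_{λ,ν}`. -/
def bcoef (τ : V × ℤ → R) (wmin : V → Equiv.Perm V) (lam ν : V) : R :=
  if (wmin (lam - ν)) (lam - ν) = (wmin lam) lam then
    D.tauw c τ (wmin ((wmin lam) (lam - ν))) ^ 2 *
      (if D.IsAffNeg (ν, ⌊(1 - ⟪lam, coroot ν⟫) / c⌋) then 1 else 0)
  else D.ccoef c τ wmin ((wmin lam) lam) (linPart (wmin lam) ν)

/-- The intertwining operator `(𝒥f)(λ) = τ_{w_λ}⁻¹ (I_{w_λ} f)(λ₊)`, where `Iw` assigns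
to each `w_λ` the composite of integral-reflection operators along a reduced word. -/
def Jcal (τ : V × ℤ → R) (wmin : V → Equiv.Perm V)
    (Iw : Equiv.Perm V → (V → R) → V → R) (f : V → R) (x : V) : R :=
  (D.tauw c τ (wmin x))⁻¹ * Iw (wmin x) f ((wmin x) x)

end Ops

/-- The Yang–Yang type Morse function `𝒱_μ`. -/
def morse (t : V → ℝ) (μ ξ : V) : ℝ :=
  (c / 2) * ⟪ξ, ξ⟫ - 2 * Real.pi * ⟪D.rhoVee + μ, ξ⟫ +
    ∑ α ∈ D.pos, (2 / ⟪α, α⟫) * ∫ x in (0:ℝ)..(⟪ξ, α⟫), mvfun (t α) x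

/-- The critical equation `cξ + ∑_{α>0} v_α(⟨ξ,α⟩) α∨ = 2π(ρ∨+μ)`. -/
def criticalEq (t : V → ℝ) (μ ξ : V) : Prop :=
  c • ξ + ∑ α ∈ D.pos, mvfun (t α) ⟪ξ, α⟫ • coroot α
    = (2 * Real.pi) • (D.rhoVee + μ)

/-- The Hessian bilinear form `H_{η,ζ}(ξ)`. -/
def hessForm (t : V → ℝ) (ξ η ζ : V) : ℝ :=
  c * ⟪η, ζ⟫ + ∑ α ∈ D.R0,
    (1 - t α ^ 2) * ⟪η, α⟫ * ⟪ζ, α⟫ /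
      (⟪α, α⟫ * (1 - 2 * t α * Real.cos ⟪ξ, α⟫ + t α ^ 2))

/-- `κ_± = (2/n) ∑_{α>0} (1-t_α²)/(1 ± |t_α|)²`; here `s = ±1`. -/
def kappaPM (t : V → ℝ) (s : ℝ) : ℝ :=
  (2 / (D.n : ℝ)) * ∑ α ∈ D.pos, (1 - t α ^ 2) / (1 + s * |t α|) ^ 2

end RootSystemData

/-!
`𝒱_μ` is the quadratic `(c/2)‖ξ‖² - 2π⟪ρ∨ + μ, ξ⟫` plus a sum of ridge functions in the directions
of the positive roots. The profile of each ridge is a second primitive of a positive Poisson kernel,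
hence convex, so `𝒱_μ` is strongly convex with modulus `c`. Such a function lies above its tangent
plane plus `(c/2)‖· - ξ‖²`, which makes it coercive and identifies its critical points with its
unique minimizer. The Hessian comes out as a sum over the positive roots; since `-1` on the line of
a root is induced by a reflection, its summand is even in the root, and the sum is half of the sum
over all roots.
-/

section Convexity

variable {E : Type*} [NormedAddCommGroup E] [NormedSpace ℝ E] {f : E → ℝ} {f' : E →L[ℝ] ℝ} {x : E}

theorem add_fderiv_sub_le_of_convexOn_univ
    (hf : ConvexOn ℝ Set.univ f) (hf' : HasFDerivAt f f' x) (y : E) :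
    f x + f' (y - x) ≤ f y := by
  have hline : ConvexOn ℝ Set.univ (f ∘ AffineMap.lineMap (k := ℝ) x y) :=
    hf.comp_affineMap (AffineMap.lineMap x y)
  have hderiv : HasDerivAt (f ∘ AffineMap.lineMap (k := ℝ) x y) (f' (y - x)) 0 :=
    HasFDerivAt.comp_hasDerivAt_of_eq 0 hf' AffineMap.hasDerivAt_lineMap (by simp)
  have hslope := hline.le_slope_of_hasDerivAt (Set.mem_univ 0) (Set.mem_univ 1) one_pos hderiv
  simp only [slope_def_field, Function.comp_apply, AffineMap.lineMap_apply_one,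
    AffineMap.lineMap_apply_zero, sub_zero, div_one] at hslope
  linarith

theorem forall_le_iff_fderiv_eq_zero_of_convexOn_univ
    (hf : ConvexOn ℝ Set.univ f) (hf' : HasFDerivAt f f' x) : (∀ y, f x ≤ f y) ↔ f' = 0 := by
  refine ⟨fun hmin => IsLocalMin.hasFDerivAt_eq_zero (.of_forall hmin) hf', ?_⟩
  rintro rfl y
  simpa using add_fderiv_sub_le_of_convexOn_univ hf hf' y

end Convexity

section StrongConvexity

variable {E : Type*} [NormedAddCommGroup E] [InnerProductSpace ℝ E] {f : E → ℝ} {x : E} {m : ℝ}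

theorem add_fderiv_sub_add_sq_le_of_strongConvexOn_univ {f' : E →L[ℝ] ℝ}
    (hf : StrongConvexOn Set.univ m f) (hf' : HasFDerivAt f f' x) (y : E) :
    f x + f' (y - x) + m / 2 * ‖y - x‖ ^ 2 ≤ f y := by
  have hderiv := hf'.sub ((hasStrictFDerivAt_norm_sq x).hasFDerivAt.const_mul (m / 2))
  have htangent :=
    add_fderiv_sub_le_of_convexOn_univ (strongConvexOn_iff_convex.1 hf) hderiv y
  have hpolar : ‖y‖ ^ 2 = ‖x‖ ^ 2 + 2 * ⟪x, y - x⟫ + ‖y - x‖ ^ 2 := by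
    simpa using norm_add_sq_real x (y - x)
  simp only [sub_apply, smul_apply,
    innerSL_apply_apply, smul_eq_mul, nsmul_eq_mul, Nat.cast_ofNat, hpolar] at htangent
  linarith

theorem tendsto_cobounded_atTop_of_strongConvexOn_univ (hm : 0 < m)
    (hf : StrongConvexOn Set.univ m f) (hdiff : DifferentiableAt ℝ f x) :
    Filter.Tendsto f (Bornology.cobounded E) Filter.atTop := by
  set f' := fderiv ℝ f x
  have hbound (y : E) : f x + dist y x * (m / 2 * dist y x - ‖f'‖) ≤ f y := by
    have hquad := add_fderiv_sub_add_sq_le_of_strongConvexOn_univ hf hdiff.hasFDerivAt y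
    have hlin := (abs_le.1 (f'.le_opNorm (y - x))).1
    rw [dist_eq_norm]
    linarith
  have hgrowth : Filter.Tendsto (fun r : ℝ => f x + r * (m / 2 * r - ‖f'‖))
      Filter.atTop Filter.atTop :=
    Filter.tendsto_atTop_add_const_left _ _ <| Filter.tendsto_id.atTop_mul_atTop₀ <|
      Filter.tendsto_atTop_add_const_right _ _ (Filter.tendsto_id.const_mul_atTop (half_pos hm))
  exact Filter.tendsto_atTop_mono hbound
    (hgrowth.comp (Metric.tendsto_dist_right_cobounded_atTop x))

theorem existsUnique_forall_le_of_strongConvexOn_univ [FiniteDimensional ℝ E] (hm : 0 < m)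
    (hf : StrongConvexOn Set.univ m f) (hdiff : Differentiable ℝ f) :
    ∃! x, ∀ y, f x ≤ f y := by
  have : ProperSpace E := FiniteDimensional.proper ℝ E
  have hcoercive := tendsto_cobounded_atTop_of_strongConvexOn_univ hm hf (hdiff 0)
  rw [Metric.cobounded_eq_cocompact] at hcoercive
  obtain ⟨x, hx⟩ := hdiff.continuous.exists_forall_le hcoercive
  exact ⟨x, hx, fun y hy => (hf.strictConvexOn hm).eq_of_isMinOn (fun z _ => hy z)
    (fun z _ => hx z) trivial trivial⟩

end StrongConvexity

section RidgeEnergy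

variable {E : Type*} [NormedAddCommGroup E] [InnerProductSpace ℝ E] {ι : Type*}

/-- A sum of ridge functions `F i ⟪ξ, a i⟫` on top of the quadratic `(c/2)‖ξ‖² - ⟪b, ξ⟫`. The
Morse functions `𝒱_μ` are of this form. -/
def ridgeEnergy (c : ℝ) (b : E) (s : Finset ι) (a : ι → E) (F : ι → ℝ → ℝ) (ξ : E) : ℝ :=
  c / 2 * ⟪ξ, ξ⟫ - ⟪b, ξ⟫ + ∑ i ∈ s, F i ⟪ξ, a i⟫

/-- The gradient of `ridgeEnergy c b s a F`, where `F'` is the family of derivatives of `F`. -/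
def ridgeGradient (c : ℝ) (b : E) (s : Finset ι) (a : ι → E) (F' : ι → ℝ → ℝ) (ξ : E) : E :=
  c • ξ - b + ∑ i ∈ s, F' i ⟪ξ, a i⟫ • a i

variable {c : ℝ} {b : E} {s : Finset ι} {a : ι → E} {F F' F'' : ι → ℝ → ℝ}

theorem contDiff_ridgeEnergy {n : WithTop ℕ∞} (hF : ∀ i ∈ s, ContDiff ℝ n (F i)) :
    ContDiff ℝ n (ridgeEnergy c b s a F) :=
  ((contDiff_const.mul (contDiff_id.inner ℝ contDiff_id)).sub
    (contDiff_const.inner ℝ contDiff_id)).add <|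
    ContDiff.sum fun i hi => (hF i hi).comp (contDiff_id.inner ℝ contDiff_const)

theorem strongConvexOn_ridgeEnergy (hF : ∀ i ∈ s, ConvexOn ℝ Set.univ (F i)) :
    StrongConvexOn Set.univ c (ridgeEnergy c b s a F) := by
  have hridge : ConvexOn ℝ Set.univ (∑ i ∈ s, F i ∘ innerₗ E (a i)) :=
    Finset.sum_induction _ (ConvexOn ℝ Set.univ) (fun _ _ => ConvexOn.add)
      (convexOn_const 0 convex_univ) fun i hi => (hF i hi).comp_linearMap (innerₗ E (a i))
  have hlinear : ConvexOn ℝ Set.univ (innerₗ E (-b)) := LinearMap.convexOn _ convex_univ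
  have hsplit : (fun ξ => ridgeEnergy c b s a F ξ - c / 2 * ‖ξ‖ ^ 2) =
      ⇑(innerₗ E (-b)) + ∑ i ∈ s, F i ∘ innerₗ E (a i) := by
    ext ξ
    simp only [ridgeEnergy, Pi.add_apply, Finset.sum_apply, Function.comp_apply,
      innerₗ_apply_apply, inner_neg_right, real_inner_self_eq_norm_sq, real_inner_comm ξ]
    ring
  rw [strongConvexOn_iff_convex, hsplit]
  exact hlinear.add hridge

theorem hasFDerivAt_inner_const (v ξ : E) : HasFDerivAt (fun ξ : E => ⟪ξ, v⟫) (innerSL ℝ v) ξ := by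
  simp only [real_inner_comm v]
  exact (innerSL ℝ v).hasFDerivAt

theorem hasFDerivAt_ridgeEnergy {ξ : E}
    (hF : ∀ i ∈ s, HasDerivAt (F i) (F' i ⟪ξ, a i⟫) ⟪ξ, a i⟫) :
    HasFDerivAt (ridgeEnergy c b s a F) (innerSL ℝ (ridgeGradient c b s a F' ξ)) ξ := by
  have hquad : HasFDerivAt (fun ξ : E => c / 2 * ⟪ξ, ξ⟫) (innerSL ℝ (c • ξ)) ξ := by
    simp only [real_inner_self_eq_norm_sq]
    refine ((hasStrictFDerivAt_norm_sq ξ).hasFDerivAt.const_mul (c / 2)).congr_fderiv ?_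
    rw [map_smul]
    module
  have hridge : HasFDerivAt (fun ξ : E => ∑ i ∈ s, F i ⟪ξ, a i⟫)
      (∑ i ∈ s, F' i ⟪ξ, a i⟫ • innerSL ℝ (a i)) ξ :=
    HasFDerivAt.fun_sum fun i hi => (hF i hi).comp_hasFDerivAt ξ (hasFDerivAt_inner_const (a i) ξ)
  refine ((hquad.sub (innerSL ℝ b).hasFDerivAt).add hridge).congr_fderiv ?_
  simp only [ridgeGradient, map_add, map_sub, map_sum, map_smul]

theorem hasFDerivAt_ridgeGradient {ξ : E}
    (hF' : ∀ i ∈ s, HasDerivAt (F' i) (F'' i ⟪ξ, a i⟫) ⟪ξ, a i⟫) :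
    HasFDerivAt (ridgeGradient c b s a F')
      (c • ContinuousLinearMap.id ℝ E +
        ∑ i ∈ s, (F'' i ⟪ξ, a i⟫ • innerSL ℝ (a i)).smulRight (a i)) ξ :=
  (((hasFDerivAt_id ξ).const_smul c).sub_const b).add <| HasFDerivAt.fun_sum fun i hi =>
    ((hF' i hi).comp_hasFDerivAt ξ (hasFDerivAt_inner_const (a i) ξ)).smul_const (a i)

theorem iteratedFDeriv_two_ridgeEnergy (hF : ∀ i ∈ s, ∀ x, HasDerivAt (F i) (F' i x) x)
    (hF' : ∀ i ∈ s, ∀ x, HasDerivAt (F' i) (F'' i x) x) (ξ η ζ : E) :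
    iteratedFDeriv ℝ 2 (ridgeEnergy c b s a F) ξ ![η, ζ] =
      c * ⟪η, ζ⟫ + ∑ i ∈ s, F'' i ⟪ξ, a i⟫ * ⟪η, a i⟫ * ⟪ζ, a i⟫ := by
  have hfderiv : fderiv ℝ (ridgeEnergy c b s a F) =
      (innerSL ℝ : E →L[ℝ] E →L[ℝ] ℝ) ∘ ridgeGradient c b s a F' :=
    funext fun ξ => (hasFDerivAt_ridgeEnergy fun i hi => hF i hi _).fderiv
  have hsecond := (innerSL ℝ : E →L[ℝ] E →L[ℝ] ℝ).hasFDerivAt.comp ξ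
    (hasFDerivAt_ridgeGradient (c := c) (b := b) fun i hi => hF' i hi ⟪ξ, a i⟫)
  rw [iteratedFDeriv_two_apply, hfderiv, hsecond.fderiv]
  change ⟪(c • ContinuousLinearMap.id ℝ E +
    ∑ i ∈ s, (F'' i ⟪ξ, a i⟫ • innerSL ℝ (a i)).smulRight (a i)) η, ζ⟫ = _
  simp [inner_add_left, sum_inner, real_inner_smul_right, real_inner_comm]

theorem forall_ridgeEnergy_le_iff_ridgeGradient_eq_zero {ξ : E}
    (hconvex : ConvexOn ℝ Set.univ (ridgeEnergy c b s a F))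
    (hF : ∀ i ∈ s, HasDerivAt (F i) (F' i ⟪ξ, a i⟫) ⟪ξ, a i⟫) :
    (∀ ζ, ridgeEnergy c b s a F ξ ≤ ridgeEnergy c b s a F ζ) ↔
      ridgeGradient c b s a F' ξ = 0 := by
  rw [forall_le_iff_fderiv_eq_zero_of_convexOn_univ hconvex (hasFDerivAt_ridgeEnergy hF),
    ← norm_eq_zero, innerSL_apply_norm, norm_eq_zero]

end RidgeEnergy

section PoissonKernel

variable {t : ℝ}

/-- The Poisson kernel of the unit disc at radius `t` and angle `x`, that is, Mathlib's
`poissonKernel 0 t (exp (x * I))` written out in real terms. It is the derivative of `mvfun t`. -/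
def realPoissonKernel (t x : ℝ) : ℝ := (1 - t ^ 2) / (1 - 2 * t * Real.cos x + t ^ 2)

theorem one_sub_two_mul_mul_cos_add_sq_pos (ht : t ^ 2 ≠ 1) (x : ℝ) :
    0 < 1 - 2 * t * Real.cos x + t ^ 2 := by
  have hsq : 1 - 2 * t * Real.cos x + t ^ 2 = (t - Real.cos x) ^ 2 + Real.sin x ^ 2 := by
    linear_combination -Real.sin_sq_add_cos_sq x
  rw [hsq]
  refine lt_of_le_of_ne (by positivity) fun hzero => ht ?_
  obtain ⟨hcos, hsin⟩ := (add_eq_zero_iff_of_nonneg (sq_nonneg _) (sq_nonneg _)).1 hzero.symm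
  rw [sub_eq_zero.1 (pow_eq_zero_iff two_ne_zero |>.1 hcos)]
  linear_combination Real.sin_sq_add_cos_sq x - hsin

theorem realPoissonKernel_pos (ht : t ^ 2 < 1) (x : ℝ) : 0 < realPoissonKernel t x :=
  div_pos (sub_pos.2 ht) (one_sub_two_mul_mul_cos_add_sq_pos ht.ne x)

theorem contDiff_realPoissonKernel (ht : t ^ 2 ≠ 1) {n : WithTop ℕ∞} :
    ContDiff ℝ n (realPoissonKernel t) :=
  contDiff_const.div (by fun_prop) fun x => (one_sub_two_mul_mul_cos_add_sq_pos ht x).ne'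

theorem mvfun_eq_integral_realPoissonKernel (t x : ℝ) :
    mvfun t x = ∫ y in (0 : ℝ)..x, realPoissonKernel t y := by
  simp only [mvfun, realPoissonKernel, ← intervalIntegral.integral_const_mul, mul_one_div]

theorem hasDerivAt_mvfun (ht : t ^ 2 ≠ 1) (x : ℝ) :
    HasDerivAt (mvfun t) (realPoissonKernel t x) x := by
  rw [funext (mvfun_eq_integral_realPoissonKernel t)]
  have hcont : Continuous (realPoissonKernel t) :=
    (contDiff_realPoissonKernel (n := 0) ht).continuous
  exact (hcont.integral_hasStrictDerivAt 0 x).hasDerivAt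

theorem contDiff_infty_of_hasDerivAt {f f' : ℝ → ℝ} (hf : ∀ x, HasDerivAt f (f' x) x)
    (hf' : ContDiff ℝ (⊤ : ℕ∞) f') : ContDiff ℝ (⊤ : ℕ∞) f :=
  contDiff_infty_iff_deriv.2 ⟨fun x => (hf x).differentiableAt,
    (funext fun x => (hf x).deriv : deriv f = f') ▸ hf'⟩

theorem contDiff_mvfun (ht : t ^ 2 ≠ 1) : ContDiff ℝ (⊤ : ℕ∞) (mvfun t) :=
  contDiff_infty_of_hasDerivAt (hasDerivAt_mvfun ht) (contDiff_realPoissonKernel ht)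

theorem monotone_mvfun (ht : t ^ 2 < 1) : Monotone (mvfun t) :=
  monotone_of_hasDerivAt_nonneg (hasDerivAt_mvfun ht.ne) fun x => (realPoissonKernel_pos ht x).le

/-- The primitive of `mvfun t` vanishing at `0`, the profile of the ridge functions in `𝒱_μ`. -/
def mvPrimitive (t x : ℝ) : ℝ := ∫ y in (0 : ℝ)..x, mvfun t y

theorem hasDerivAt_mvPrimitive (ht : t ^ 2 ≠ 1) (x : ℝ) :
    HasDerivAt (mvPrimitive t) (mvfun t x) x :=
  ((contDiff_mvfun ht).continuous.integral_hasStrictDerivAt 0 x).hasDerivAt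

theorem contDiff_mvPrimitive (ht : t ^ 2 ≠ 1) : ContDiff ℝ (⊤ : ℕ∞) (mvPrimitive t) :=
  contDiff_infty_of_hasDerivAt (hasDerivAt_mvPrimitive ht) (contDiff_mvfun ht)

theorem convexOn_mvPrimitive (ht : t ^ 2 < 1) : ConvexOn ℝ Set.univ (mvPrimitive t) := by
  refine Monotone.convexOn_univ_of_deriv
    (fun x => (hasDerivAt_mvPrimitive ht.ne x).differentiableAt) ?_
  rw [funext fun x => (hasDerivAt_mvPrimitive ht.ne x).deriv]
  exact monotone_mvfun ht

end PoissonKernel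

theorem inner_coroot_self {V : Type*} [NormedAddCommGroup V] [InnerProductSpace ℝ V] {α : V}
    (hα : α ≠ 0) : ⟪α, coroot α⟫ = 2 := by
  rw [coroot, real_inner_smul_right, div_mul_cancel₀ _ (inner_self_ne_zero.2 hα)]

namespace RootSystemData

variable {V : Type*} [NormedAddCommGroup V] [InnerProductSpace ℝ V]

theorem finiteDimensional (D : RootSystemData V) : FiniteDimensional ℝ V :=
  Module.finite_of_finrank_pos (D.rank_eq ▸ D.n_pos)

variable {D : RootSystemData V}

theorem neg_mem_R0 {α : V} (hα : α ∈ D.R0) : -α ∈ D.R0 := by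
  have hreflect := D.reflect_mem α hα α hα
  rw [inner_coroot_self (D.ne_zero α hα)] at hreflect
  convert hreflect using 1
  module

theorem exists_mem_W0_apply_eq_neg {α : V} (hα : α ∈ D.R0) : ∃ w ∈ D.W0, w α = -α := by
  have hdual : innerₗ V (coroot α) α = 2 := by
    rw [innerₗ_apply_apply, real_inner_comm, inner_coroot_self (D.ne_zero α hα)]
  refine ⟨(Module.reflection hdual).toEquiv, Subgroup.subset_closure ⟨α, hα, fun x => ?_⟩,
    Module.reflection_apply_self hdual⟩
  simp [Module.reflection_apply, real_inner_comm]

theorem sum_R0_eq_sum_pos {M : Type*} [AddCommMonoid M] (f : V → M) :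
    ∑ α ∈ D.R0, f α = ∑ α ∈ D.pos, (f α + f (-α)) := by
  have hunion : D.R0 = D.pos ∪ D.pos.image Neg.neg := by
    ext α
    simp only [Finset.mem_union, Finset.mem_image]
    constructor
    · intro hα
      exact (D.pos_or_neg α hα).imp_right fun hneg => ⟨-α, hneg, neg_neg α⟩
    · rintro (hpos | ⟨β, hβ, rfl⟩)
      · exact D.pos_subset hpos
      · exact neg_mem_R0 (D.pos_subset hβ)
  have hdisjoint : Disjoint D.pos (D.pos.image Neg.neg) := by
    refine Finset.disjoint_left.2 fun α hα himage => ?_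
    obtain ⟨β, hβ, rfl⟩ := Finset.mem_image.1 himage
    exact D.pos_not_both β hβ hα
  rw [hunion, Finset.sum_union hdisjoint, Finset.sum_image neg_injective.injOn,
    Finset.sum_add_distrib]

variable {c : ℝ} {t : V → ℝ}

theorem hessForm_eq_sum_pos (hneg : ∀ α ∈ D.R0, t (-α) = t α) (ξ η ζ : V) :
    D.hessForm c t ξ η ζ = c * ⟪η, ζ⟫ + ∑ α ∈ D.pos,
      (2 / ⟪α, α⟫ * realPoissonKernel (t α) ⟪ξ, α⟫) * ⟪η, α⟫ * ⟪ζ, α⟫ := by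
  rw [hessForm, sum_R0_eq_sum_pos]
  congr 1
  refine Finset.sum_congr rfl fun α hα => ?_
  simp only [hneg α (D.pos_subset hα), inner_neg_right, inner_neg_left, Real.cos_neg,
    realPoissonKernel, div_eq_mul_inv, mul_inv]
  ring

theorem hessForm_self_pos (hc : 0 < c) (ht : ∀ α ∈ D.R0, t α ^ 2 < 1) (ξ : V) {η : V}
    (hη : η ≠ 0) : 0 < D.hessForm c t ξ η η := by
  refine add_pos_of_pos_of_nonneg (mul_pos hc (real_inner_self_pos.2 hη)) ?_
  refine Finset.sum_nonneg fun α hα => div_nonneg ?_ ?_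
  · rw [mul_assoc]
    exact mul_nonneg (sub_pos.2 (ht α hα)).le (mul_self_nonneg _)
  · exact mul_nonneg real_inner_self_nonneg
      (one_sub_two_mul_mul_cos_add_sq_pos (ht α hα).ne _).le

theorem morse_eq_ridgeEnergy (μ : V) :
    D.morse c t μ = ridgeEnergy c ((2 * Real.pi) • (D.rhoVee + μ)) D.pos id
      (fun α x => 2 / ⟪α, α⟫ * mvPrimitive (t α) x) := by
  ext ξ
  rw [morse, ridgeEnergy, real_inner_smul_left]
  rfl

theorem criticalEq_iff_ridgeGradient_eq_zero (μ ξ : V) :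
    D.criticalEq c t μ ξ ↔ ridgeGradient c ((2 * Real.pi) • (D.rhoVee + μ)) D.pos id
      (fun α x => 2 / ⟪α, α⟫ * mvfun (t α) x) ξ = 0 := by
  simp only [criticalEq, ridgeGradient, coroot, smul_smul, mul_comm, id_eq]
  rw [← sub_eq_zero, sub_add_eq_add_sub]

theorem contDiff_morse (ht : ∀ α ∈ D.pos, t α ^ 2 ≠ 1) (μ : V) :
    ContDiff ℝ (⊤ : ℕ∞) (D.morse c t μ) := by
  rw [morse_eq_ridgeEnergy]
  exact contDiff_ridgeEnergy fun α hα => contDiff_const.mul (contDiff_mvPrimitive (ht α hα))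

theorem strongConvexOn_morse (ht : ∀ α ∈ D.pos, t α ^ 2 < 1) (μ : V) :
    StrongConvexOn Set.univ c (D.morse c t μ) := by
  rw [morse_eq_ridgeEnergy]
  exact strongConvexOn_ridgeEnergy fun α hα =>
    (convexOn_mvPrimitive (ht α hα)).smul (div_nonneg zero_le_two real_inner_self_nonneg)

theorem iteratedFDeriv_two_morse (ht : ∀ α ∈ D.pos, t α ^ 2 ≠ 1)
    (hneg : ∀ α ∈ D.R0, t (-α) = t α) (μ ξ η ζ : V) :
    iteratedFDeriv ℝ 2 (D.morse c t μ) ξ ![η, ζ] = D.hessForm c t ξ η ζ := by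
  rw [morse_eq_ridgeEnergy, hessForm_eq_sum_pos hneg]
  exact iteratedFDeriv_two_ridgeEnergy
    (fun α hα x => (hasDerivAt_mvPrimitive (ht α hα) x).const_mul _)
    (fun α hα x => (hasDerivAt_mvfun (ht α hα) x).const_mul _) ξ η ζ

theorem criticalEq_iff_forall_morse_le (hc : 0 ≤ c) (ht : ∀ α ∈ D.pos, t α ^ 2 < 1) (μ ξ : V) :
    D.criticalEq c t μ ξ ↔ ∀ ζ, D.morse c t μ ξ ≤ D.morse c t μ ζ := by
  have hconvex : ConvexOn ℝ Set.univ (D.morse c t μ) :=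
    strongConvexOn_zero.1 ((strongConvexOn_morse ht μ).mono hc)
  rw [morse_eq_ridgeEnergy] at hconvex ⊢
  rw [criticalEq_iff_ridgeGradient_eq_zero]
  exact (forall_ridgeEnergy_le_iff_ridgeGradient_eq_zero hconvex fun α hα =>
    (hasDerivAt_mvPrimitive (ht α hα).ne _).const_mul _).symm

end RootSystemData

open RootSystemData in
theorem statement10_general {V : Type*} [NormedAddCommGroup V] [InnerProductSpace ℝ V]
    (D : RootSystemData V) (c : ℝ) (hc : 0 < c)
    (t : V → ℝ) (ht : ∀ α ∈ D.R0, t α ∈ Set.Ioo (-1 : ℝ) 1)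
    (htneg : ∀ α ∈ D.R0, t (-α) = t α) (μ : V) :
    ContDiff ℝ (⊤ : ℕ∞) (D.morse c t μ) ∧
    StrictConvexOn ℝ Set.univ (D.morse c t μ) ∧
    (∀ ξ η ζ : V, iteratedFDeriv ℝ 2 (D.morse c t μ) ξ ![η, ζ] = D.hessForm c t ξ η ζ) ∧
    (∀ ξ η : V, η ≠ 0 → 0 < D.hessForm c t ξ η η) ∧
    Filter.Tendsto (D.morse c t μ) (Filter.comap norm Filter.atTop) Filter.atTop ∧
    (∃ ξmin : V, (∀ ζ : V, D.morse c t μ ξmin ≤ D.morse c t μ ζ) ∧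
      (∀ ξ' : V, (∀ ζ : V, D.morse c t μ ξ' ≤ D.morse c t μ ζ) → ξ' = ξmin) ∧
      D.criticalEq c t μ ξmin ∧
      (∀ ξ' : V, D.criticalEq c t μ ξ' → ξ' = ξmin)) := by
  have hsq : ∀ α ∈ D.R0, t α ^ 2 < 1 := fun α hα =>
    (sq_lt_one_iff_abs_lt_one _).2 (abs_lt.2 (ht α hα))
  have hlt : ∀ α ∈ D.pos, t α ^ 2 < 1 := fun α hα => hsq α (D.pos_subset hα)
  have hne : ∀ α ∈ D.pos, t α ^ 2 ≠ 1 := fun α hα => (hlt α hα).ne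
  have hconvex : StrongConvexOn Set.univ c (D.morse c t μ) := strongConvexOn_morse hlt μ
  have hsmooth : ContDiff ℝ (⊤ : ℕ∞) (D.morse c t μ) := contDiff_morse hne μ
  have hdiff : Differentiable ℝ (D.morse c t μ) := hsmooth.differentiable (by simp)
  have hcritical := criticalEq_iff_forall_morse_le hc.le hlt μ
  refine ⟨hsmooth, hconvex.strictConvexOn hc, iteratedFDeriv_two_morse hne htneg μ,
    fun ξ _ => hessForm_self_pos hc hsq ξ, ?_, ?_⟩
  · rw [comap_norm_atTop]
    exact tendsto_cobounded_atTop_of_strongConvexOn_univ hc hconvex (hdiff 0)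
  · have := D.finiteDimensional
    obtain ⟨ξmin, hmin, huniq⟩ := existsUnique_forall_le_of_strongConvexOn_univ hc hconvex hdiff
    exact ⟨ξmin, hmin, huniq, (hcritical ξmin).2 hmin, fun ξ' h => huniq ξ' ((hcritical ξ').1 h)⟩

open RootSystemData in
/-- for every coweight `μ`, the Morse function `𝒱_μ` is smooth and
strictly convex, its Hessian is the positive-definite bilinear form `H_{η,ζ}(ξ)`,
`𝒱_μ(ξ) → +∞` as `‖ξ‖ → ∞`, and `𝒱_μ` attains a unique global minimum `ξ_μ`, which is
the unique solution of the critical equation. -/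
theorem statement10 {V : Type*} [NormedAddCommGroup V] [InnerProductSpace ℝ V]
    (D : RootSystemData V) (c : ℝ) (hc : 0 < c)
    (t : V → ℝ) (ht : ∀ α ∈ D.R0, t α ∈ Set.Ioo (-1 : ℝ) 1)
    (htinv : ∀ α ∈ D.R0, ∀ β ∈ D.R0, (∃ w ∈ D.W0, w α = β) → t α = t β)
    (μ : V) (hμ : μ ∈ D.coweightLattice) :
    ContDiff ℝ (⊤ : ℕ∞) (D.morse c t μ) ∧
    StrictConvexOn ℝ Set.univ (D.morse c t μ) ∧
    (∀ ξ η ζ : V, iteratedFDeriv ℝ 2 (D.morse c t μ) ξ ![η, ζ] = D.hessForm c t ξ η ζ) ∧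
    (∀ ξ η : V, η ≠ 0 → 0 < D.hessForm c t ξ η η) ∧
    Filter.Tendsto (D.morse c t μ) (Filter.comap norm Filter.atTop) Filter.atTop ∧
    (∃ ξmin : V, (∀ ζ : V, D.morse c t μ ξmin ≤ D.morse c t μ ζ) ∧
      (∀ ξ' : V, (∀ ζ : V, D.morse c t μ ξ' ≤ D.morse c t μ ζ) → ξ' = ξmin) ∧
      D.criticalEq c t μ ξmin ∧
      (∀ ξ' : V, D.criticalEq c t μ ξ' → ξ' = ξmin)) :=
  statement10_general D c hc t ht (fun α hα =>
    (htinv α hα (-α) (neg_mem_R0 hα) (exists_mem_W0_apply_eq_neg hα)).symm) μ
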